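/- Let k ≥ 2 be an integer and let W = (w₁, …, wₙ) be a random vector with independent coordinates each distributed as χ²(k) (chi-square with k degrees of freedom). If f : ℝ₊ⁿ → ℝ is coordinatewise non-decreasing and convex, then the map t ↦ Φ⁻¹(P(f(W) ≤ t)) is concave on the interval where it is defined. -/

import Mathlib

open MeasureTheory ProbabilityTheory Real

/-- The standard normal cumulative distribution function. -/
noncomputable def Phi (x : ℝ) : ℝ := ((gaussianReal 0 1) (Set.Iic x)).toReal

/-- The (generalized) inverse of the standard normal CDF. -/
noncomputable def PhiInv (p : ℝ) : ℝ := sInf {x | p ≤ Phi x}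

/-- The chi-square distribution with `k` degrees of freedom, realized as the law of the
sum of squares of `k` independent standard Gaussians. -/
noncomputable def chiSq (k : ℕ) : Measure ℝ :=
  Measure.map (fun x : Fin k → ℝ => ∑ i, (x i) ^ 2) (Measure.pi fun _ => gaussianReal 0 1)

open Filter Topology

/-- The standard normal density. -/
noncomputable def phi (x : ℝ) : ℝ := gaussianPDFReal 0 1 x

lemma phi_eq (x : ℝ) : phi x = (√(2 * π))⁻¹ * rexp (-x ^ 2 / 2) := by
  simp [phi, gaussianPDFReal]

lemma phi_pos (x : ℝ) : 0 < phi x := gaussianPDFReal_pos 0 1 x one_ne_zero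

lemma hasDerivAt_phi (x : ℝ) : HasDerivAt phi (-x * phi x) x := by
  have h : HasDerivAt (fun x : ℝ => (√(2 * π))⁻¹ * rexp (-x ^ 2 / 2))
      ((√(2 * π))⁻¹ * (rexp (-x ^ 2 / 2) * (-(2 * x) / 2))) x := by
    have h1 : HasDerivAt (fun x : ℝ => -x ^ 2 / 2) (-(2 * x) / 2) x := by
      simpa using ((hasDerivAt_pow 2 x).neg).div_const 2
    exact h1.exp.const_mul _
  have e : phi = fun x : ℝ => (√(2 * π))⁻¹ * rexp (-x ^ 2 / 2) := funext phi_eq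
  rw [e]
  convert h using 1
  ring

lemma continuous_phi : Continuous phi :=
  continuous_iff_continuousAt.2 fun x => (hasDerivAt_phi x).continuousAt

lemma phi_le_one (x : ℝ) : phi x ≤ 1 := by
  rw [phi_eq]
  have h1 : rexp (-x ^ 2 / 2) ≤ 1 := by
    apply Real.exp_le_one_iff.2; nlinarith [sq_nonneg x]
  have h2 : (√(2 * π))⁻¹ ≤ 1 := by
    apply inv_le_one_of_one_le₀
    rw [Real.one_le_sqrt]
    nlinarith [Real.pi_gt_three]
  calc _ ≤ (1:ℝ) * 1 := by gcongr
    _ = 1 := by norm_num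

lemma phi_anti {x M : ℝ} (h : |x| ≤ M) : phi M ≤ phi x := by
  rw [phi_eq, phi_eq]
  have : x ^ 2 ≤ M ^ 2 := by
    rw [← sq_abs]; exact pow_le_pow_left₀ (abs_nonneg _) h 2
  gcongr

lemma integrable_phi : Integrable phi := integrable_gaussianPDFReal 0 1

lemma Phi_eq_integral (x : ℝ) : Phi x = ∫ t in Set.Iic x, phi t := by
  unfold Phi
  rw [gaussianReal_apply_eq_integral 0 one_ne_zero, ENNReal.toReal_ofReal]
  · rfl
  · exact integral_nonneg fun t => (phi_pos t).le

lemma hasDerivAt_Phi (x : ℝ) : HasDerivAt Phi (phi x) x := by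
  have h : ∀ y, Phi y = Phi 0 + ∫ t in (0:ℝ)..y, phi t := by
    intro y
    rw [← intervalIntegral.integral_Iic_sub_Iic integrable_phi.integrableOn
      integrable_phi.integrableOn, ← Phi_eq_integral, ← Phi_eq_integral]
    ring
  rw [funext h]
  exact (intervalIntegral.integral_hasDerivAt_right (continuous_phi.intervalIntegrable _ _)
    (continuous_phi.stronglyMeasurableAtFilter _ _) continuous_phi.continuousAt).const_add _

lemma continuous_Phi : Continuous Phi :=
  continuous_iff_continuousAt.2 fun x => (hasDerivAt_Phi x).continuousAt

lemma strictMono_Phi : StrictMono Phi := by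
  apply strictMono_of_deriv_pos
  intro x
  rw [(hasDerivAt_Phi x).deriv]
  exact phi_pos x

lemma Phi_eq_cdf : Phi = cdf (gaussianReal 0 1) := by
  funext x
  rw [cdf_eq_real]; rfl

lemma tendsto_Phi_atTop : Tendsto Phi atTop (𝓝 1) := by
  rw [Phi_eq_cdf]; exact tendsto_cdf_atTop _

lemma tendsto_Phi_atBot : Tendsto Phi atBot (𝓝 0) := by
  rw [Phi_eq_cdf]; exact tendsto_cdf_atBot _

lemma Phi_pos (x : ℝ) : 0 < Phi x :=
  lt_of_le_of_lt ENNReal.toReal_nonneg (strictMono_Phi (sub_one_lt x))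

lemma Phi_lt_one (x : ℝ) : Phi x < 1 := by
  have h := strictMono_Phi (lt_add_one x)
  refine lt_of_lt_of_le h ?_
  rw [Phi_eq_cdf]; exact cdf_le_one _ _

@[simp] lemma PhiInv_Phi (x : ℝ) : PhiInv (Phi x) = x := by
  have : {y | Phi x ≤ Phi y} = Set.Ici x := by
    ext y; simp [strictMono_Phi.le_iff_le]
  rw [PhiInv, this, csInf_Ici]

lemma exists_Phi {p : ℝ} (h0 : 0 < p) (h1 : p < 1) : ∃ x, Phi x = p := by
  obtain ⟨a, ha⟩ := (tendsto_Phi_atBot.eventually (gt_mem_nhds h0)).exists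
  obtain ⟨b, hb⟩ := (tendsto_Phi_atTop.eventually (lt_mem_nhds h1)).exists
  exact mem_range_of_exists_le_of_exists_ge continuous_Phi ⟨a, ha.le⟩ ⟨b, hb.le⟩

lemma Phi_PhiInv {p : ℝ} (h0 : 0 < p) (h1 : p < 1) : Phi (PhiInv p) = p := by
  obtain ⟨x, rfl⟩ := exists_Phi h0 h1
  simp

lemma continuousAt_PhiInv {p : ℝ} (h0 : 0 < p) (h1 : p < 1) : ContinuousAt PhiInv p := by
  apply continuousAt_of_monotoneOn_of_image_mem_nhds (s := Set.Ioo 0 1)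
  · intro a ha b hb hab
    rw [← strictMono_Phi.le_iff_le, Phi_PhiInv ha.1 ha.2, Phi_PhiInv hb.1 hb.2]
    exact hab
  · exact Ioo_mem_nhds h0 h1
  · have : PhiInv '' Set.Ioo 0 1 = Set.univ := by
      apply Set.eq_univ_of_forall
      intro x
      exact ⟨Phi x, ⟨Phi_pos x, Phi_lt_one x⟩, PhiInv_Phi x⟩
    rw [this]; exact univ_mem

lemma hasDerivAt_PhiInv {p : ℝ} (h0 : 0 < p) (h1 : p < 1) :
    HasDerivAt PhiInv (phi (PhiInv p))⁻¹ p := by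
  apply HasDerivAt.of_local_left_inverse (continuousAt_PhiInv h0 h1)
    (hasDerivAt_Phi _) (phi_pos _).ne'
  filter_upwards [Ioo_mem_nhds h0 h1] with q hq
  exact Phi_PhiInv hq.1 hq.2

open Filter Topology

lemma second_deriv_nonneg {c c' : ℝ → ℝ} {c2 x : ℝ} (h1 : ∀ t, HasDerivAt c (c' t) t)
    (h2 : HasDerivAt c' c2 x) (hmin : ∀ t, c x ≤ c t) : 0 ≤ c2 := by
  by_contra! hneg
  have hd : deriv c = c' := funext fun t => (h1 t).deriv
  have hdx : deriv c x = 0 := IsLocalMin.deriv_eq_zero (Eventually.of_forall hmin)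
  have hmax : IsLocalMax c x := isLocalMax_of_deriv_deriv_neg (by rw [hd, h2.deriv]; exact hneg)
    hdx (h1 x).continuousAt
  have hconst : c =ᶠ[𝓝 x] fun _ => c x := by
    filter_upwards [hmax] with t ht
    exact le_antisymm ht (hmin t)
  have h3 : deriv c =ᶠ[𝓝 x] deriv (fun _ => c x) := hconst.deriv
  have h4 : c' =ᶠ[𝓝 x] fun _ => 0 := by
    rw [hd] at h3
    filter_upwards [h3] with t ht
    simpa using ht
  have h5 : c2 = 0 := by
    rw [← h2.deriv, h4.deriv_eq]; simp
  linarith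

/-- Solutions of the equation satisfied by `Φ⁻¹` of the heat flow. -/
structure HeatSol (V V1 V2 : ℝ → ℝ → ℝ) (M P : ℝ) : Prop where
  cont : Continuous fun q : ℝ × ℝ => V q.1 q.2
  bdd : ∀ r x, |V r x| ≤ M
  bdd1 : ∀ r x, |V1 r x| ≤ P
  d1 : ∀ r x, HasDerivAt (V r) (V1 r x) x
  d2 : ∀ r x, HasDerivAt (V1 r) (V2 r x) x
  dr : ∀ r x, HasDerivAt (fun r => V r x) (r * (V2 r x - V r x * V1 r x ^ 2)) r

lemma bracket_bound {l m v v0 v1 p p0 p1 M P e x y K : ℝ} 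
    (hv0 : |v0| ≤ M) (hv1 : |v1| ≤ M)
    (hp : |p| ≤ P) (hp0 : |p0| ≤ P) (hp1 : |p1| ≤ P) (hneg : v - l * v0 - m * v1 ≤ 0)
    (hx : l * (p - p0) + 2 * e * x = 0) (hy : m * (p - p1) + 2 * e * y = 0)
    (hex : |e * x| ≤ K) (hey : |e * y| ≤ K) :
    v * p ^ 2 - l * (v0 * p0 ^ 2) - m * (v1 * p1 ^ 2) ≤ 8 * M * P * K := by
  have hM : 0 ≤ M := (abs_nonneg _).trans hv0
  have key : v * p ^ 2 - l * (v0 * p0 ^ 2) - m * (v1 * p1 ^ 2) =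
      p ^ 2 * (v - l * v0 - m * v1) + -2 * (v0 * (e * x) * (p + p0))
        + -2 * (v1 * (e * y) * (p + p1)) := by
    have hx' : 2 * (e * x) = - (l * (p - p0)) := by linarith
    have hy' : 2 * (e * y) = - (m * (p - p1)) := by linarith
    linear_combination (v0 * (p + p0)) * hx' + (v1 * (p + p1)) * hy'
  have b : ∀ {w q z : ℝ}, |w| ≤ M → |z| ≤ K → |q| ≤ P → -2 * (w * z * (p + q)) ≤ 4 * M * P * K := by
    intro w q z hw hz hq
    have h1 : |w * z * (p + q)| ≤ M * K * (P + P) := by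
      rw [abs_mul, abs_mul]
      have := (abs_add_le p q).trans (add_le_add hp hq)
      have hK : 0 ≤ K := (abs_nonneg _).trans hz
      gcongr
    have := neg_abs_le (w * z * (p + q))
    nlinarith
  have b0 := b hv0 hex hp0
  have b1 := b hv1 hey hp1
  have : p ^ 2 * (v - l * v0 - m * v1) ≤ 0 := mul_nonpos_of_nonneg_of_nonpos (sq_nonneg _) hneg
  rw [key]; linarith

lemma max_principle {V V1 V2 A A1 A2 B B1 B2 : ℝ → ℝ → ℝ} {M P l m : ℝ}
    (hV : HeatSol V V1 V2 M P) (hA : HeatSol A A1 A2 M P) (hB : HeatSol B B1 B2 M P)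
    (hl : 0 < l) (hm : 0 < m) (hlm : l + m = 1)
    (h0 : ∀ x y, l * A 0 x + m * B 0 y ≤ V 0 (l * x + m * y)) :
    l * A 1 0 + m * B 1 0 ≤ V 1 0 := by
  have hM : 0 ≤ M := (abs_nonneg _).trans (hV.bdd 0 0)
  have hP : 0 ≤ P := (abs_nonneg _).trans (hV.bdd1 0 0)
  by_contra! hcon
  obtain ⟨η, hη, hη'⟩ : ∃ η > 0, V 1 0 - l * A 1 0 - m * B 1 0 + η < 0 :=
    ⟨(l * A 1 0 + m * B 1 0 - V 1 0) / 2, by linarith, by linarith⟩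
  -- choose e
  obtain ⟨e, he, hsmall⟩ : ∃ e > 0, 4 * e + 8 * M * P * √(2 * M * e) < η := by
    have hc : Continuous fun e : ℝ => 4 * e + 8 * M * P * √(2 * M * e) := by fun_prop
    have h1 : ∀ᶠ e in 𝓝 (0:ℝ), 4 * e + 8 * M * P * √(2 * M * e) < η := by
      apply hc.continuousAt.eventually_lt continuousAt_const
      simpa using hη
    have h2 := (h1.filter_mono nhdsWithin_le_nhds).and (self_mem_nhdsWithin (s := Set.Ioi (0:ℝ)))
    obtain ⟨e, h3, h4⟩ := h2.exists
    exact ⟨e, h4, h3⟩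
  set D : ℝ × ℝ × ℝ → ℝ := fun q => V q.1 (l * q.2.1 + m * q.2.2) - l * A q.1 q.2.1
    - m * B q.1 q.2.2 + e * (q.2.1 ^ 2 + q.2.2 ^ 2) + η * q.1 with hD
  have hDc : Continuous D := by
    have c1 : Continuous fun q : ℝ × ℝ × ℝ => V q.1 (l * q.2.1 + m * q.2.2) :=
      hV.cont.comp (f := fun q : ℝ × ℝ × ℝ => (q.1, l * q.2.1 + m * q.2.2)) (by fun_prop)
    have c2 : Continuous fun q : ℝ × ℝ × ℝ => A q.1 q.2.1 :=
      hA.cont.comp (f := fun q : ℝ × ℝ × ℝ => (q.1, q.2.1)) (by fun_prop)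
    have c3 : Continuous fun q : ℝ × ℝ × ℝ => B q.1 q.2.2 :=
      hB.cont.comp (f := fun q : ℝ × ℝ × ℝ => (q.1, q.2.2)) (by fun_prop)
    exact (((c1.sub (continuous_const.mul c2)).sub (continuous_const.mul c3)).add
      (by fun_prop)).add (by fun_prop)
  -- bound when D<0
  have hbd : ∀ r x y, 0 ≤ r → D (r, x, y) < 0 → e * (x ^ 2 + y ^ 2) ≤ 2 * M := by
    intro r x y hr h
    simp only [hD] at h
    have a1 := neg_le_of_abs_le (hV.bdd r (l * x + m * y))
    have a2 := le_of_abs_le (hA.bdd r x)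
    have a3 := le_of_abs_le (hB.bdd r y)
    have : 0 ≤ η * r := by positivity
    nlinarith
  set R : ℝ := √(2 * M / e) with hR
  have hin : ∀ x z : ℝ, e * (x ^ 2 + z ^ 2) ≤ 2 * M → |x| ≤ R := by
    intro x z h
    apply Real.abs_le_sqrt
    rw [le_div_iff₀ he]; nlinarith [sq_nonneg z]
  have hR0 : 0 ≤ R := Real.sqrt_nonneg _
  have hK : IsCompact (Set.Icc (0:ℝ) 1 ×ˢ Set.Icc (-R) R ×ˢ Set.Icc (-R) R) :=
    isCompact_Icc.prod (isCompact_Icc.prod isCompact_Icc)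
  have hmem0 : ((1:ℝ), (0:ℝ), (0:ℝ)) ∈ Set.Icc (0:ℝ) 1 ×ˢ Set.Icc (-R) R ×ˢ Set.Icc (-R) R := by
    simp [hR0]
  obtain ⟨⟨r, x, y⟩, hq, hmin'⟩ := hK.exists_isMinOn ⟨_, hmem0⟩ hDc.continuousOn
  have hneg : D (r, x, y) < 0 := by
    refine lt_of_le_of_lt (hmin' hmem0) ?_
    simp only [hD]; simpa using hη'
  simp only [Set.mem_prod, Set.mem_Icc] at hq
  obtain ⟨⟨hr0, hr1⟩, -, -⟩ := hq
  have hmin : ∀ s x' y', 0 ≤ s → s ≤ 1 → D (r, x, y) ≤ D (s, x', y') := by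
    intro s x' y' hs0 hs1
    by_cases h : D (s, x', y') < 0
    · have h1 := hbd s x' y' hs0 h
      apply hmin'
      simp only [Set.mem_prod, Set.mem_Icc]
      exact ⟨⟨hs0, hs1⟩, abs_le.1 (hin x' y' h1), abs_le.1 (hin y' x' (by rwa [add_comm]))⟩
    · linarith
  have hrpos : 0 < r := by
    rcases hr0.eq_or_lt with h | h
    · exfalso
      subst h
      simp only [hD] at hneg
      have := h0 x y
      nlinarith [sq_nonneg x, sq_nonneg y]
    · exact h
  -- first order in x
  have hx : l * (V1 r (l * x + m * y) - A1 r x) + 2 * e * x = 0 := by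
    have hd : HasDerivAt (fun t => D (r, t, y))
        (V1 r (l * x + m * y) * l - l * A1 r x + e * (2 * x)) x := by
      simp only [hD]
      have g1 : HasDerivAt (fun t => l * t + m * y) l x := by
        simpa using ((hasDerivAt_id x).const_mul l).add_const (m * y)
      have g2 : HasDerivAt (fun t => V r (l * t + m * y)) (V1 r (l * x + m * y) * l) x :=
        (hV.d1 r (l * x + m * y)).comp x g1
      have g3 := (hA.d1 r x).const_mul l
      have g4 : HasDerivAt (fun t => e * (t ^ 2 + y ^ 2)) (e * (2 * x)) x := by
        simpa using ((hasDerivAt_pow 2 x).add_const (y ^ 2)).const_mul e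
      exact (((g2.sub g3).sub_const _).add g4).add_const _
    have := IsLocalMin.hasDerivAt_eq_zero
      (Eventually.of_forall fun t => hmin r t y hr0 hr1) hd
    linarith
  have hy : m * (V1 r (l * x + m * y) - B1 r y) + 2 * e * y = 0 := by
    have hd : HasDerivAt (fun t => D (r, x, t))
        (V1 r (l * x + m * y) * m - m * B1 r y + e * (2 * y)) y := by
      simp only [hD]
      have g1 : HasDerivAt (fun t => l * x + m * t) m y := by
        simpa using ((hasDerivAt_id y).const_mul m).const_add (l * x)
      have g2 : HasDerivAt (fun t => V r (l * x + m * t)) (V1 r (l * x + m * y) * m) y :=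
        (hV.d1 r (l * x + m * y)).comp y g1
      have g3 := (hB.d1 r y).const_mul m
      have g4 : HasDerivAt (fun t => e * (x ^ 2 + t ^ 2)) (e * (2 * y)) y := by
        simpa using ((hasDerivAt_pow 2 y).const_add (x ^ 2)).const_mul e
      exact (((g2.sub_const _).sub g3).add g4).add_const _
    have := IsLocalMin.hasDerivAt_eq_zero
      (Eventually.of_forall fun t => hmin r x t hr0 hr1) hd
    linarith
  -- second order
  have hxx : 0 ≤ V2 r (l * x + m * y) - l * A2 r x - m * B2 r y + 4 * e := by
    have sh : ∀ (a t : ℝ), HasDerivAt (fun t => a + t) 1 t := fun a t =>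
      (hasDerivAt_id t).const_add a
    have q1 : ∀ t, HasDerivAt (fun t => D (r, x + t, y + t))
        (V1 r (l * x + m * y + t) - l * A1 r (x + t) - m * B1 r (y + t)
          + e * (2 * (x + t) + 2 * (y + t))) t := by
      intro t
      have e1 : (fun t => D (r, x + t, y + t)) = fun t => V r (l * x + m * y + t) - l * A r (x + t)
          - m * B r (y + t) + e * ((x + t) ^ 2 + (y + t) ^ 2) + η * r := by
        funext t
        simp only [hD]
        have : l * (x + t) + m * (y + t) = l * x + m * y + t := by
          linear_combination t * hlm
        rw [this]
      rw [e1]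
      have g2 := (hV.d1 r (l * x + m * y + t)).comp_const_add (l * x + m * y) t
      have g3 := ((hA.d1 r (x + t)).comp_const_add x t).const_mul l
      have g4 := ((hB.d1 r (y + t)).comp_const_add y t).const_mul m
      have g5 : HasDerivAt (fun t => e * ((x + t) ^ 2 + (y + t) ^ 2))
          (e * (2 * (x + t) + 2 * (y + t))) t := by
        have := (((sh x t).pow 2).add ((sh y t).pow 2)).const_mul e
        simpa using this
      exact (((g2.sub g3).sub g4).add g5).add_const _
    have q2 : HasDerivAt (fun t => V1 r (l * x + m * y + t) - l * A1 r (x + t) - m * B1 r (y + t)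
          + e * (2 * (x + t) + 2 * (y + t)))
          (V2 r (l * x + m * y) - l * A2 r x - m * B2 r y + 4 * e) 0 := by
      have g2 : HasDerivAt (fun t => V1 r (l * x + m * y + t)) (V2 r (l * x + m * y)) 0 :=
        HasDerivAt.comp_const_add (l * x + m * y) 0 (by simpa using hV.d2 r (l * x + m * y))
      have g3 : HasDerivAt (fun t => A1 r (x + t)) (A2 r x) 0 :=
        HasDerivAt.comp_const_add x 0 (by simpa using hA.d2 r x)
      have g4 : HasDerivAt (fun t => B1 r (y + t)) (B2 r y) 0 :=
        HasDerivAt.comp_const_add y 0 (by simpa using hB.d2 r y)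
      have g5 : HasDerivAt (fun t => e * (2 * (x + t) + 2 * (y + t))) (4 * e) 0 := by
        have := (((sh x 0).const_mul 2).add ((sh y 0).const_mul 2)).const_mul e
        exact this.congr_deriv (by ring)
      exact ((g2.sub (g3.const_mul l)).sub (g4.const_mul m)).add g5
    exact second_deriv_nonneg q1 q2 (fun t => by simpa using hmin r (x + t) (y + t) hr0 hr1)
  -- r derivative
  have hrr : r * (V2 r (l * x + m * y) - V r (l * x + m * y) * V1 r (l * x + m * y) ^ 2)
      - l * (r * (A2 r x - A r x * A1 r x ^ 2)) - m * (r * (B2 r y - B r y * B1 r y ^ 2)) + η ≤ 0 := by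
    have hd : HasDerivAt (fun s => D (s, x, y))
        (r * (V2 r (l * x + m * y) - V r (l * x + m * y) * V1 r (l * x + m * y) ^ 2)
      - l * (r * (A2 r x - A r x * A1 r x ^ 2)) - m * (r * (B2 r y - B r y * B1 r y ^ 2)) + η) r := by
      simp only [hD]
      have g := (((hV.dr r (l * x + m * y)).sub ((hA.dr r x).const_mul l)).sub
        ((hB.dr r y).const_mul m)).add_const (e * (x ^ 2 + y ^ 2))
      have g' : HasDerivAt (fun s => η * s) η r := by
        simpa using (hasDerivAt_id r).const_mul η
      exact g.add g'
    by_contra! hpos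
    have h1 := (hasDerivAt_iff_tendsto_slope_left_right.1 hd).1
    have h2 : ∀ᶠ s in 𝓝[<] r, 0 < slope (fun s => D (s, x, y)) r s := h1.eventually (lt_mem_nhds hpos)
    have h3 : ∀ᶠ s in 𝓝[<] r, s ∈ Set.Ioo 0 r := Ioo_mem_nhdsLT hrpos
    obtain ⟨s, hs1, hs2⟩ := (h2.and h3).exists
    have h4 := hmin s x y hs2.1.le (hs2.2.le.trans hr1)
    rw [slope_def_field] at hs1
    have : (D (s, x, y) - D (r, x, y)) / (s - r) ≤ 0 :=
      div_nonpos_of_nonneg_of_nonpos (by linarith) (by linarith [hs2.2])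
    linarith
  have hsz := hbd r x y hr0 hneg
  have hsq : ∀ z w : ℝ, e * (z ^ 2 + w ^ 2) ≤ 2 * M → |e * z| ≤ √(2 * M * e) := by
    intro z w h
    apply Real.abs_le_sqrt
    nlinarith [sq_nonneg w, mul_le_mul_of_nonneg_left h he.le, mul_nonneg (mul_pos he he).le (sq_nonneg w)]
  have hbr := bracket_bound (hA.bdd r x) (hB.bdd r y) (hV.bdd1 r (l * x + m * y))
    (hA.bdd1 r x) (hB.bdd1 r y)
    (v := V r (l * x + m * y)) (by
      simp only [hD] at hneg
      have : 0 ≤ η * r := by positivity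
      have : 0 ≤ e * (x ^ 2 + y ^ 2) := by positivity
      linarith) hx hy (hsq x y hsz) (hsq y x (by rwa [add_comm]))
  have hfin : η ≤ r * (4 * e + 8 * M * P * √(2 * M * e)) := by
    have t1 := mul_le_mul_of_nonneg_left hbr hr0
    have t2 := mul_nonneg hr0 hxx
    linarith
  have hpos : 0 ≤ 4 * e + 8 * M * P * √(2 * M * e) := by positivity
  have : r * (4 * e + 8 * M * P * √(2 * M * e)) ≤ 4 * e + 8 * M * P * √(2 * M * e) :=
    mul_le_of_le_one_left hpos hr1
  linarith


/-- Heat flow. -/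
noncomputable def heatG (h : ℝ → ℝ) (r x : ℝ) : ℝ := ∫ z, h (x + r * z) ∂(gaussianReal 0 1)

lemma heatG_integrable {h : ℝ → ℝ} {K : ℝ} (hc : Continuous h) (hb : ∀ x, |h x| ≤ K) (r x : ℝ) :
    Integrable (fun z => h (x + r * z)) (gaussianReal 0 1) := by
  apply Integrable.of_bound (C := K)
  · exact (by fun_prop : Continuous fun z => h (x + r * z)).aestronglyMeasurable
  · exact ae_of_all _ fun z => hb _

lemma heatG_cont {h : ℝ → ℝ} {K : ℝ} (hc : Continuous h) (hb : ∀ x, |h x| ≤ K) :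
    Continuous fun q : ℝ × ℝ => heatG h q.1 q.2 := by
  unfold heatG
  apply continuous_of_dominated (bound := fun _ => K)
  · intro q
    exact (by fun_prop : Continuous fun z => h (q.2 + q.1 * z)).aestronglyMeasurable
  · intro q; exact ae_of_all _ fun z => hb _
  · exact integrable_const _
  · refine ae_of_all _ fun z => ?_
    fun_prop

lemma heatG_abs {h : ℝ → ℝ} {K : ℝ} (hb : ∀ x, |h x| ≤ K) (r x : ℝ) : |heatG h r x| ≤ K := by
  unfold heatG
  have := norm_integral_le_of_norm_le_const (μ := gaussianReal 0 1)
    (f := fun z => h (x + r * z)) (C := K) (ae_of_all _ fun z => hb _)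
  simpa using this

lemma heatG_dx {h h1 : ℝ → ℝ} {K K1 : ℝ} (hd : ∀ x, HasDerivAt h (h1 x) x) (hc1 : Continuous h1)
    (hb : ∀ x, |h x| ≤ K) (hb1 : ∀ x, |h1 x| ≤ K1) (r x : ℝ) :
    HasDerivAt (heatG h r) (heatG h1 r x) x := by
  have hc : Continuous h := continuous_iff_continuousAt.2 fun x => (hd x).continuousAt
  refine (hasDerivAt_integral_of_dominated_loc_of_deriv_le (μ := gaussianReal 0 1)
    (F := fun x z => h (x + r * z)) (F' := fun x z => h1 (x + r * z)) (s := Set.univ)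
    (bound := fun _ => K1) univ_mem ?_ ?_ ?_ ?_ ?_ ?_).2
  · exact Eventually.of_forall fun y =>
      (by fun_prop : Continuous fun z => h (y + r * z)).aestronglyMeasurable
  · exact heatG_integrable hc hb r x
  · exact (by fun_prop : Continuous fun z => h1 (x + r * z)).aestronglyMeasurable
  · exact ae_of_all _ fun z y _ => hb1 _
  · exact integrable_const _
  · exact ae_of_all _ fun z y _ => (hd (y + r * z)).comp_add_const y (r * z)

lemma integrable_id_gauss : Integrable (fun z : ℝ => z) (gaussianReal 0 1) :=
  (memLp_id_gaussianReal' 1 (by simp)).integrable le_rfl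

lemma heatG_dr {h h1 : ℝ → ℝ} {K K1 : ℝ} (hd : ∀ x, HasDerivAt h (h1 x) x) (hc1 : Continuous h1)
    (hb : ∀ x, |h x| ≤ K) (hb1 : ∀ x, |h1 x| ≤ K1) (r x : ℝ) :
    HasDerivAt (fun r => heatG h r x) (∫ z, z * h1 (x + r * z) ∂(gaussianReal 0 1)) r := by
  have hc : Continuous h := continuous_iff_continuousAt.2 fun x => (hd x).continuousAt
  refine (hasDerivAt_integral_of_dominated_loc_of_deriv_le (μ := gaussianReal 0 1)
    (F := fun r z => h (x + r * z)) (F' := fun r z => z * h1 (x + r * z)) (s := Set.univ)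
    (bound := fun z => |z| * K1) univ_mem ?_ ?_ ?_ ?_ ?_ ?_).2
  · exact Eventually.of_forall fun y =>
      (by fun_prop : Continuous fun z => h (x + y * z)).aestronglyMeasurable
  · exact heatG_integrable hc hb r x
  · exact (by fun_prop : Continuous fun z => z * h1 (x + r * z)).aestronglyMeasurable
  · refine ae_of_all _ fun z y _ => ?_
    rw [Real.norm_eq_abs, abs_mul]
    exact mul_le_mul_of_nonneg_left (hb1 _) (abs_nonneg _)
  · exact integrable_id_gauss.abs.mul_const _
  · refine ae_of_all _ fun z y _ => ?_
    have h2 : HasDerivAt (fun y => x + y * z) z y := by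
      simpa using ((hasDerivAt_id y).mul_const z).const_add x
    rw [mul_comm]
    exact (hd (x + y * z)).comp y h2

lemma gauss_integral (g : ℝ → ℝ) : ∫ z, g z ∂(gaussianReal 0 1) = ∫ z, phi z * g z := by
  rw [integral_gaussianReal_eq_integral_smul one_ne_zero]; rfl

lemma stein {g g1 : ℝ → ℝ} {K K1 : ℝ} (hd : ∀ x, HasDerivAt g (g1 x) x) (hc1 : Continuous g1)
    (hb : ∀ x, |g x| ≤ K) (hb1 : ∀ x, |g1 x| ≤ K1) :
    ∫ z, z * g z ∂(gaussianReal 0 1) = ∫ z, g1 z ∂(gaussianReal 0 1) := by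
  have hc : Continuous g := continuous_iff_continuousAt.2 fun x => (hd x).continuousAt
  have hz : Integrable (fun z : ℝ => -z * phi z) := by
    have h := integrable_mul_exp_neg_mul_sq (b := 1 / 2) (by norm_num)
    refine (h.const_mul (-(√(2 * π))⁻¹)).congr (ae_of_all _ fun z => ?_)
    simp only [phi_eq]
    have : -z ^ 2 / 2 = - (1 / 2) * z ^ 2 := by ring
    rw [this]; ring
  have I1 : Integrable (g * fun z => -z * phi z) := by
    refine hz.bdd_mul (c := K) hc.aestronglyMeasurable (ae_of_all _ hb)
  have I2 : Integrable (g1 * phi) :=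
    integrable_phi.bdd_mul (c := K1) hc1.aestronglyMeasurable (ae_of_all _ hb1)
  have I3 : Integrable (g * phi) :=
    integrable_phi.bdd_mul (c := K) hc.aestronglyMeasurable (ae_of_all _ hb)
  have key := integral_mul_deriv_eq_deriv_mul_of_integrable (fun x _ => hd x)
    (fun x _ => hasDerivAt_phi x) I1 I2 I3
  rw [gauss_integral, gauss_integral]
  calc ∫ z, phi z * (z * g z) = - ∫ z, g z * (-z * phi z) := by
        rw [← integral_neg]; congr 1; ext z; ring
    _ = ∫ z, g1 z * phi z := by rw [key]; simp
    _ = _ := by congr 1; ext z; ring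

lemma heatG_stein {h1 h2 : ℝ → ℝ} {K K1 : ℝ} (hd : ∀ x, HasDerivAt h1 (h2 x) x)
    (hc1 : Continuous h2) (hb : ∀ x, |h1 x| ≤ K) (hb1 : ∀ x, |h2 x| ≤ K1) (r x : ℝ) :
    ∫ z, z * h1 (x + r * z) ∂(gaussianReal 0 1) = r * heatG h2 r x := by
  rw [stein (g := fun z => h1 (x + r * z)) (g1 := fun z => r * h2 (x + r * z)) (K := K)
    (K1 := |r| * K1)]
  · rw [integral_const_mul]; rfl
  · intro z
    have h3 : HasDerivAt (fun z => x + r * z) r z := by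
      simpa using ((hasDerivAt_id z).const_mul r).const_add x
    rw [mul_comm]
    exact (hd (x + r * z)).comp z h3
  · fun_prop
  · exact fun z => hb _
  · intro z
    rw [abs_mul]
    exact mul_le_mul_of_nonneg_left (hb1 _) (abs_nonneg _)

lemma heatSol_of_C2 {f f1 f2 : ℝ → ℝ} {M K K2 : ℝ} (hd : ∀ x, HasDerivAt f (f1 x) x)
    (hd1 : ∀ x, HasDerivAt f1 (f2 x) x) (hc2 : Continuous f2)
    (hlo : ∀ x, Phi (-M) ≤ f x) (hhi : ∀ x, f x ≤ Phi M) (hb1 : ∀ x, |f1 x| ≤ K)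
    (hb2 : ∀ x, |f2 x| ≤ K2) :
    HeatSol (fun r x => PhiInv (heatG f r x))
      (fun r x => heatG f1 r x / phi (PhiInv (heatG f r x)))
      (fun r x => heatG f2 r x / phi (PhiInv (heatG f r x)) + PhiInv (heatG f r x) *
        (heatG f1 r x / phi (PhiInv (heatG f r x))) ^ 2) M (K / phi M) := by
  have hc : Continuous f := continuous_iff_continuousAt.2 fun x => (hd x).continuousAt
  have hc1 : Continuous f1 := continuous_iff_continuousAt.2 fun x => (hd1 x).continuousAt
  have hb : ∀ x, |f x| ≤ 1 := fun x => by
    rw [abs_le]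
    constructor
    · linarith [hlo x, Phi_pos (-M)]
    · linarith [hhi x, Phi_lt_one M]
  have glo : ∀ r x, Phi (-M) ≤ heatG f r x := by
    intro r x
    have := integral_mono (integrable_const (Phi (-M))) (heatG_integrable hc hb r x)
      (fun z => hlo _)
    simpa [heatG] using this
  have ghi : ∀ r x, heatG f r x ≤ Phi M := by
    intro r x
    have := integral_mono (heatG_integrable hc hb r x) (integrable_const (Phi M))
      (fun z => hhi _)
    simpa [heatG] using this
  have g0 : ∀ r x, 0 < heatG f r x := fun r x => (Phi_pos _).trans_le (glo r x)
  have g1 : ∀ r x, heatG f r x < 1 := fun r x => (ghi r x).trans_lt (Phi_lt_one _)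
  have vb : ∀ r x, |PhiInv (heatG f r x)| ≤ M := by
    intro r x
    rw [abs_le, ← strictMono_Phi.le_iff_le, ← strictMono_Phi.le_iff_le (b := M),
      Phi_PhiInv (g0 r x) (g1 r x)]
    exact ⟨glo r x, ghi r x⟩
  have dx : ∀ r x, HasDerivAt (fun x => PhiInv (heatG f r x))
      (heatG f1 r x / phi (PhiInv (heatG f r x))) x := by
    intro r x
    have := (hasDerivAt_PhiInv (g0 r x) (g1 r x)).comp x (heatG_dx hd hc1 hb hb1 r x)
    rw [div_eq_inv_mul]
    exact this
  refine ⟨?_, vb, ?_, dx, ?_, ?_⟩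
  · rw [continuous_iff_continuousAt]
    intro q
    exact (continuousAt_PhiInv (g0 q.1 q.2) (g1 q.1 q.2)).comp
      (f := fun q : ℝ × ℝ => heatG f q.1 q.2) (heatG_cont hc hb).continuousAt
  · intro r x
    rw [abs_div, abs_of_pos (phi_pos _)]
    have hK : 0 ≤ K := (abs_nonneg _).trans (hb1 0)
    exact div_le_div₀ hK (heatG_abs hb1 r x) (phi_pos _) (phi_anti (vb r x))
  · intro r x
    have hp := (hasDerivAt_phi (PhiInv (heatG f r x))).comp x (dx r x)
    have := (heatG_dx hd1 hc2 hb1 hb2 r x).div hp (phi_pos _).ne'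
    refine this.congr_deriv ?_
    have := (phi_pos (PhiInv (heatG f r x))).ne'
    simp only [Function.comp]
    field_simp
    ring
  · intro r x
    have h1 := heatG_dr hd hc1 hb hb1 r x
    rw [heatG_stein hd1 hc2 hb1 hb2] at h1
    have := (hasDerivAt_PhiInv (g0 r x) (g1 r x)).comp r h1
    refine this.congr_deriv ?_
    have := (phi_pos (PhiInv (heatG f r x))).ne'
    field_simp
    ring


/-- bounded `C²` functions -/
def C2B (u : ℝ → ℝ) (M K : ℝ) : Prop :=
  ∃ u1 u2 : ℝ → ℝ, (∀ x, HasDerivAt u (u1 x) x) ∧ (∀ x, HasDerivAt u1 (u2 x) x) ∧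
    Continuous u2 ∧ (∀ x, |u x| ≤ M) ∧ (∀ x, |u1 x| ≤ K) ∧ (∀ x, |u2 x| ≤ K)

lemma C2B.heatSol {u : ℝ → ℝ} {M K : ℝ} (h : C2B u M K) :
    ∃ V1 V2, HeatSol (fun r x => PhiInv (heatG (fun x => Phi (u x)) r x)) V1 V2 M (K / phi M) := by
  obtain ⟨u1, u2, d1, d2, c2, b, b1, b2⟩ := h
  have hc : Continuous u := continuous_iff_continuousAt.2 fun x => (d1 x).continuousAt
  have hc1 : Continuous u1 := continuous_iff_continuousAt.2 fun x => (d2 x).continuousAt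
  have hM : 0 ≤ M := (abs_nonneg _).trans (b 0)
  have hK : 0 ≤ K := (abs_nonneg _).trans (b1 0)
  have hcp := continuous_phi
  refine ⟨_, _, heatSol_of_C2 (f := fun x => Phi (u x)) (f1 := fun x => phi (u x) * u1 x)
    (f2 := fun x => phi (u x) * (u2 x - u x * u1 x ^ 2)) (K := K) (K2 := K + M * K ^ 2)
    ?_ ?_ ?_ ?_ ?_ ?_ ?_⟩
  · exact fun x => (hasDerivAt_Phi (u x)).comp x (d1 x)
  · intro x
    have := ((hasDerivAt_phi (u x)).comp x (d1 x)).mul (d2 x)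
    refine this.congr_deriv ?_
    simp only [Function.comp]
    ring
  · fun_prop
  · exact fun x => strictMono_Phi.monotone (abs_le.1 (b x)).1
  · exact fun x => strictMono_Phi.monotone (abs_le.1 (b x)).2
  · intro x
    rw [abs_mul, abs_of_pos (phi_pos _)]
    calc _ ≤ 1 * K := by gcongr; exacts [phi_le_one _, b1 x]
      _ = K := one_mul K
  · intro x
    rw [abs_mul, abs_of_pos (phi_pos _)]
    have h1 : |u2 x - u x * u1 x ^ 2| ≤ K + M * K ^ 2 := by
      refine (abs_sub _ _).trans ?_
      rw [abs_mul, abs_pow]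
      gcongr
      exacts [b2 x, b x, b1 x]
    calc _ ≤ 1 * (K + M * K ^ 2) := by gcongr; exact phi_le_one _
      _ = _ := one_mul _

lemma ehrhard1_C2 {a b v : ℝ → ℝ} {M K l m : ℝ} (ha : C2B a M K) (hb : C2B b M K) (hv : C2B v M K)
    (hl : 0 < l) (hm : 0 < m) (hlm : l + m = 1)
    (h : ∀ x y, l * a x + m * b y ≤ v (l * x + m * y)) :
    l * PhiInv (∫ z, Phi (a z) ∂(gaussianReal 0 1)) + m * PhiInv (∫ z, Phi (b z) ∂(gaussianReal 0 1))
      ≤ PhiInv (∫ z, Phi (v z) ∂(gaussianReal 0 1)) := by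
  obtain ⟨_, _, sa⟩ := ha.heatSol
  obtain ⟨_, _, sb⟩ := hb.heatSol
  obtain ⟨_, _, sv⟩ := hv.heatSol
  have := max_principle sv sa sb hl hm hlm (by
    intro x y
    simpa [heatG] using h x y)
  simpa [heatG] using this

/-- Running averages. -/
noncomputable def avg (e : ℝ) (u : ℝ → ℝ) (x : ℝ) : ℝ := ∫ z in (0:ℝ)..1, u (x + e * z)

lemma avg_cont {u : ℝ → ℝ} (hu : Continuous u) : Continuous fun q : ℝ × ℝ => avg q.1 u q.2 := by
  unfold avg
  apply intervalIntegral.continuous_parametric_intervalIntegral_of_continuous'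
  fun_prop

lemma avg_cont' {u : ℝ → ℝ} (hu : Continuous u) (e : ℝ) : Continuous (avg e u) :=
  (avg_cont hu).comp (f := fun x : ℝ => (e, x)) (by fun_prop)

lemma avg_bdd {u : ℝ → ℝ} {M : ℝ} (hb : ∀ x, |u x| ≤ M) (e x : ℝ) : |avg e u x| ≤ M := by
  have := intervalIntegral.norm_integral_le_of_norm_le_const (a := 0) (b := 1) (C := M)
    (f := fun z => u (x + e * z)) (fun z _ => hb _)
  simpa [avg] using this

lemma avg_deriv {u : ℝ → ℝ} (hu : Continuous u) {e : ℝ} (he : e ≠ 0) (x : ℝ) :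
    HasDerivAt (avg e u) (e⁻¹ * (u (x + e) - u x)) x := by
  have h : ∀ y, avg e u y = e⁻¹ * ((∫ z in (0:ℝ)..(y + e), u z) - ∫ z in (0:ℝ)..y, u z) := by
    intro y
    unfold avg
    rw [intervalIntegral.integral_comp_add_mul _ he,
      intervalIntegral.integral_interval_sub_left (hu.intervalIntegrable _ _)
        (hu.intervalIntegrable _ _)]
    simp
  rw [funext h]
  have d : ∀ y, HasDerivAt (fun y => ∫ z in (0:ℝ)..y, u z) (u y) y := fun y =>
    intervalIntegral.integral_hasDerivAt_right (hu.intervalIntegrable _ _)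
      (hu.stronglyMeasurableAtFilter _ _) hu.continuousAt
  exact (((d (x + e)).comp_add_const x e).sub (d x)).const_mul _

lemma avg_rel {a b v : ℝ → ℝ} {l m : ℝ} (ha : Continuous a) (hb : Continuous b) (hv : Continuous v)
    (hlm : l + m = 1) (h : ∀ x y, l * a x + m * b y ≤ v (l * x + m * y)) (e x y : ℝ) :
    l * avg e a x + m * avg e b y ≤ avg e v (l * x + m * y) := by
  unfold avg
  rw [← intervalIntegral.integral_const_mul, ← intervalIntegral.integral_const_mul,
    ← intervalIntegral.integral_add]
  · apply intervalIntegral.integral_mono_on zero_le_one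
    · exact (by fun_prop : Continuous _).intervalIntegrable _ _
    · exact (by fun_prop : Continuous _).intervalIntegrable _ _
    · intro z _
      refine (h _ _).trans_eq ?_
      congr 1
      linear_combination e * z * hlm
  · exact (by fun_prop : Continuous _).intervalIntegrable _ _
  · exact (by fun_prop : Continuous _).intervalIntegrable _ _

lemma avg2_C2B {u : ℝ → ℝ} {M e : ℝ} (hu : Continuous u) (hb : ∀ x, |u x| ≤ M) (he : e ≠ 0) :
    C2B (avg e (avg e u)) M (|e|⁻¹ * (2 * M) + |e|⁻¹ * (2 * (|e|⁻¹ * (2 * M)))) := by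
  have hM : 0 ≤ M := (abs_nonneg _).trans (hb 0)
  have key : ∀ {w : ℝ → ℝ} {N : ℝ}, (∀ x, |w x| ≤ N) → ∀ x,
      |e⁻¹ * (w (x + e) - w x)| ≤ |e|⁻¹ * (2 * N) := by
    intro w N hw x
    rw [abs_mul, abs_inv]
    have := (abs_sub (w (x + e)) (w x)).trans (add_le_add (hw _) (hw _))
    gcongr
    linarith
  have hc := avg_cont' hu e
  have hb1 := key (avg_bdd hb e)
  have hb0 := key hb
  refine ⟨fun x => e⁻¹ * (avg e u (x + e) - avg e u x),
    fun x => e⁻¹ * (e⁻¹ * (u (x + e + e) - u (x + e)) - e⁻¹ * (u (x + e) - u x)),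
    avg_deriv hc he, ?_, by fun_prop, avg_bdd (avg_bdd hb e) e, ?_, ?_⟩
  · intro x
    exact (((avg_deriv hu he (x + e)).comp_add_const x e).sub (avg_deriv hu he x)).const_mul _
  · intro x
    refine (hb1 x).trans ?_
    have : 0 ≤ |e|⁻¹ * (2 * (|e|⁻¹ * (2 * M))) := by positivity
    linarith
  · intro x
    refine (key (w := fun x => e⁻¹ * (u (x + e) - u x)) hb0 x).trans ?_
    have : 0 ≤ |e|⁻¹ * (2 * M) := by positivity
    linarith

lemma avg2_tendsto {u : ℝ → ℝ} (hu : Continuous u) (x : ℝ) :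
    Tendsto (fun e => avg e (avg e u) x) (𝓝 0) (𝓝 (u x)) := by
  have hc : Continuous fun e : ℝ => avg e (avg e u) x := by
    conv => enter [1, e]; rw [avg]
    apply intervalIntegral.continuous_parametric_intervalIntegral_of_continuous'
    exact (avg_cont hu).comp (f := fun p : ℝ × ℝ => (p.1, x + p.1 * p.2)) (by fun_prop)
  have := hc.tendsto 0
  simpa [avg] using this

/-- The functional inequality for continuous bounded functions. -/
def Bor (E : Type*) [AddCommGroup E] [Module ℝ E] [TopologicalSpace E] [MeasurableSpace E]
    (μ : Measure E) (l m : ℝ) : Prop :=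
  ∀ (M : ℝ) (a b v : E → ℝ), Continuous a → Continuous b → Continuous v →
    (∀ x, |a x| ≤ M) → (∀ x, |b x| ≤ M) → (∀ x, |v x| ≤ M) →
    (∀ x y, l * a x + m * b y ≤ v (l • x + m • y)) →
    l * PhiInv (∫ z, Phi (a z) ∂μ) + m * PhiInv (∫ z, Phi (b z) ∂μ) ≤ PhiInv (∫ z, Phi (v z) ∂μ)

lemma int_Phi {E : Type*} [TopologicalSpace E] [MeasurableSpace E] [OpensMeasurableSpace E]
    {μ : Measure E} [IsProbabilityMeasure μ] {u : E → ℝ} (hu : Continuous u) :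
    Integrable (fun z => Phi (u z)) μ := by
  apply Integrable.of_bound (C := 1)
  · exact (continuous_Phi.comp hu).aestronglyMeasurable
  · refine ae_of_all _ fun z => ?_
    rw [Real.norm_eq_abs, abs_of_pos (Phi_pos _)]
    exact (Phi_lt_one _).le

lemma int_Phi_mem {E : Type*} [TopologicalSpace E] [MeasurableSpace E] [OpensMeasurableSpace E]
    {μ : Measure E} [IsProbabilityMeasure μ] {u : E → ℝ} {M : ℝ}
    (hu : Continuous u) (hb : ∀ x, |u x| ≤ M) :
    Phi (-M) ≤ ∫ z, Phi (u z) ∂μ ∧ ∫ z, Phi (u z) ∂μ ≤ Phi M := by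
  constructor
  · have := integral_mono (integrable_const (Phi (-M))) (int_Phi (μ := μ) hu)
      (fun z => strictMono_Phi.monotone (abs_le.1 (hb z)).1)
    simpa using this
  · have := integral_mono (int_Phi (μ := μ) hu) (integrable_const (Phi M))
      (fun z => strictMono_Phi.monotone (abs_le.1 (hb z)).2)
    simpa using this

lemma bor_gauss {l m : ℝ} (hl : 0 < l) (hm : 0 < m) (hlm : l + m = 1) :
    Bor ℝ (gaussianReal 0 1) l m := by
  intro M a b v ha hb hv ba bb bv h
  have key : ∀ {u : ℝ → ℝ}, Continuous u → (∀ x, |u x| ≤ M) →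
      Tendsto (fun e => PhiInv (∫ z, Phi (avg e (avg e u) z) ∂(gaussianReal 0 1))) (𝓝[≠] 0)
        (𝓝 (PhiInv (∫ z, Phi (u z) ∂(gaussianReal 0 1)))) := by
    intro u hu bu
    obtain ⟨h1, h2⟩ := int_Phi_mem (μ := gaussianReal 0 1) hu bu
    refine (continuousAt_PhiInv ((Phi_pos _).trans_le h1) (h2.trans_lt (Phi_lt_one _))).tendsto.comp ?_
    apply tendsto_integral_filter_of_dominated_convergence (fun _ => (1:ℝ))
    · exact Eventually.of_forall fun e =>
        (continuous_Phi.comp (avg_cont' (avg_cont' hu e) e)).aestronglyMeasurable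
    · refine Eventually.of_forall fun e => ae_of_all _ fun z => ?_
      rw [Real.norm_eq_abs, abs_of_pos (Phi_pos _)]
      exact (Phi_lt_one _).le
    · exact integrable_const _
    · refine ae_of_all _ fun z => ?_
      exact (continuous_Phi.tendsto _).comp ((avg2_tendsto hu z).mono_left nhdsWithin_le_nhds)
  refine le_of_tendsto_of_tendsto (((key ha ba).const_mul l).add ((key hb bb).const_mul m))
    (key hv bv) ?_
  filter_upwards [self_mem_nhdsWithin] with e he
  exact ehrhard1_C2 (avg2_C2B ha ba he) (avg2_C2B hb bb he) (avg2_C2B hv bv he) hl hm hlm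
    (avg_rel (avg_cont' ha e) (avg_cont' hb e) (avg_cont' hv e) hlm (avg_rel ha hb hv hlm h e) e)


lemma bor_pi {E : Type*} [NormedAddCommGroup E] [NormedSpace ℝ E] [MeasurableSpace E] [BorelSpace E]
    [SecondCountableTopology E] {μ : Measure E} [IsProbabilityMeasure μ] {l m : ℝ}
    (h : Bor E μ l m) (n : ℕ) : Bor (Fin n → E) (Measure.pi fun _ => μ) l m := by
  induction n with
  | zero =>
    intro M a b v ha hb hv ba bb bv hr
    have key : ∀ u : (Fin 0 → E) → ℝ,
        PhiInv (∫ z, Phi (u z) ∂(Measure.pi fun _ : Fin 0 => μ)) = u default := by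
      intro u
      rw [integral_unique]; simp
    rw [key, key, key]
    refine (hr default default).trans_eq ?_
    congr 1
    exact Subsingleton.elim _ _
  | succ n ih =>
    intro M a b v ha hb hv ba bb bv hr
    set T : ((Fin (n + 1) → E) → ℝ) → (Fin n → E) → ℝ := fun u y =>
      PhiInv (∫ x, Phi (u (Fin.cons x y)) ∂μ) with hT
    have ccons : ∀ y : Fin n → E, Continuous fun x : E => (Fin.cons x y : Fin (n + 1) → E) :=
      fun y => by fun_prop
    have ccons' : ∀ x : E, Continuous fun y : Fin n → E => (Fin.cons x y : Fin (n + 1) → E) :=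
      fun x => by fun_prop
    have hpos : ∀ {u : (Fin (n + 1) → E) → ℝ}, Continuous u → (∀ x, |u x| ≤ M) → ∀ y,
        0 < ∫ x, Phi (u (Fin.cons x y)) ∂μ ∧ ∫ x, Phi (u (Fin.cons x y)) ∂μ < 1 := by
      intro u hu bu y
      obtain ⟨h1, h2⟩ := int_Phi_mem (μ := μ) (hu.comp (ccons y)) (fun x => bu _)
      exact ⟨(Phi_pos _).trans_le h1, h2.trans_lt (Phi_lt_one _)⟩
    have Tc : ∀ {u : (Fin (n + 1) → E) → ℝ}, Continuous u → (∀ x, |u x| ≤ M) →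
        Continuous (T u) := by
      intro u hu bu
      have hc : Continuous fun y : Fin n → E => ∫ x, Phi (u (Fin.cons x y)) ∂μ := by
        apply continuous_of_dominated (bound := fun _ => (1:ℝ))
        · exact fun y => (continuous_Phi.comp (hu.comp (ccons y))).aestronglyMeasurable
        · refine fun y => ae_of_all _ fun x => ?_
          rw [Real.norm_eq_abs, abs_of_pos (Phi_pos _)]
          exact (Phi_lt_one _).le
        · exact integrable_const _
        · exact ae_of_all _ fun x => continuous_Phi.comp (hu.comp (ccons' x))
      rw [continuous_iff_continuousAt]
      intro y
      exact (continuousAt_PhiInv (hpos hu bu y).1 (hpos hu bu y).2).comp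
        (f := fun y : Fin n → E => ∫ x, Phi (u (Fin.cons x y)) ∂μ) hc.continuousAt
    have PT : ∀ {u : (Fin (n + 1) → E) → ℝ}, Continuous u → (∀ x, |u x| ≤ M) → ∀ y,
        Phi (T u y) = ∫ x, Phi (u (Fin.cons x y)) ∂μ := fun hu bu y =>
      Phi_PhiInv (hpos hu bu y).1 (hpos hu bu y).2
    have Tb : ∀ {u : (Fin (n + 1) → E) → ℝ}, Continuous u → (∀ x, |u x| ≤ M) →
        ∀ y, |T u y| ≤ M := by
      intro u hu bu y
      rw [abs_le, ← strictMono_Phi.le_iff_le, ← strictMono_Phi.le_iff_le (b := M), PT hu bu]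
      exact int_Phi_mem (μ := μ) (hu.comp (ccons y)) (fun x => bu _)
    have Ti : ∀ {u : (Fin (n + 1) → E) → ℝ}, Continuous u → (∀ x, |u x| ≤ M) →
        ∫ z, Phi (u z) ∂(Measure.pi fun _ : Fin (n + 1) => μ)
          = ∫ y, Phi (T u y) ∂(Measure.pi fun _ : Fin n => μ) := by
      intro u hu bu
      have e := (measurePreserving_piFinSuccAbove (fun _ : Fin (n + 1) => μ) 0).symm
      have e1 := e.integral_comp' (fun z => Phi (u z))
      rw [← e1]
      have hi : Integrable (fun z => Phi (u z)) (Measure.pi fun _ : Fin (n + 1) => μ) := int_Phi hu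
      rw [integral_prod_symm]
      · apply integral_congr_ae
        refine ae_of_all _ fun y => ?_
        simp only [PT hu bu y]
        have hc : ∀ x, (MeasurableEquiv.piFinSuccAbove (fun _ : Fin (n + 1) => E) 0).symm (x, y)
            = (Fin.cons x y : Fin (n + 1) → E) := by
          intro x
          exact Fin.insertNth_zero' x y
        simp only [hc]
      · exact (e.integrable_comp_emb (MeasurableEquiv.measurableEmbedding _)).2 hi
    rw [Ti ha ba, Ti hb bb, Ti hv bv]
    apply ih M (T a) (T b) (T v) (Tc ha ba) (Tc hb bb) (Tc hv bv) (Tb ha ba) (Tb hb bb) (Tb hv bv)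
    intro y y'
    apply h M _ _ _ (ha.comp (ccons y)) (hb.comp (ccons y')) (hv.comp (ccons _)) (fun _ => ba _)
      (fun _ => bb _) (fun _ => bv _)
    intro x x'
    refine (hr _ _).trans_eq ?_
    simp only [Function.comp]
    congr 1
    funext i
    refine Fin.cases ?_ (fun i => ?_) i <;> simp

lemma bor_sets {E : Type*} [NormedAddCommGroup E] [NormedSpace ℝ E] [MeasurableSpace E]
    [BorelSpace E] {μ : Measure E} [IsProbabilityMeasure μ] {l m : ℝ}
    (hl : 0 < l) (hm : 0 < m) (hlm : l + m = 1) (h : Bor E μ l m) {A B C : Set E}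
    (hA : IsClosed A) (hB : IsClosed B) (hC : IsClosed C)
    (hABC : ∀ x ∈ A, ∀ y ∈ B, l • x + m • y ∈ C)
    (hA0 : 0 < μ.real A) (hA1 : μ.real A < 1) (hB0 : 0 < μ.real B) (hB1 : μ.real B < 1) :
    Phi (l * PhiInv (μ.real A) + m * PhiInv (μ.real B)) ≤ μ.real C := by
  have nA : A.Nonempty := by
    by_contra hh; rw [Set.not_nonempty_iff_eq_empty] at hh; simp [hh] at hA0
  have nB : B.Nonempty := by
    by_contra hh; rw [Set.not_nonempty_iff_eq_empty] at hh; simp [hh] at hB0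
  have nC : C.Nonempty := ⟨_, hABC _ nA.some_mem _ nB.some_mem⟩
  have hdist : ∀ x y, Metric.infDist (l • x + m • y) C ≤
      l * Metric.infDist x A + m * Metric.infDist y B := by
    intro x y
    apply le_of_forall_pos_le_add
    intro ε hε
    obtain ⟨a, haA, ha⟩ := (Metric.infDist_lt_iff nA).1 (lt_add_of_pos_right (Metric.infDist x A) hε)
    obtain ⟨b, hbB, hb⟩ := (Metric.infDist_lt_iff nB).1 (lt_add_of_pos_right (Metric.infDist y B) hε)
    refine (Metric.infDist_le_dist_of_mem (hABC a haA b hbB)).trans ?_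
    have : dist (l • x + m • y) (l • a + m • b) ≤ l * dist x a + m * dist y b := by
      refine (dist_add_add_le _ _ _ _).trans ?_
      rw [dist_smul₀, dist_smul₀, Real.norm_of_nonneg hl.le, Real.norm_of_nonneg hm.le]
    refine this.trans ?_
    have e1 := mul_le_mul_of_nonneg_left ha.le hl.le
    have e2 := mul_le_mul_of_nonneg_left hb.le hm.le
    have : ε = l * ε + m * ε := by rw [← add_mul, hlm, one_mul]
    linarith
  -- step 1
  have step1 : ∀ (R c : ℝ) (L : ℝ), c ≤ R → 0 ≤ L →
      Phi (l * PhiInv (Phi R * μ.real A) + m * PhiInv (Phi R * μ.real B)) ≤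
        ∫ z, Phi (max c (R - L * Metric.infDist z C)) ∂μ := by
    intro R c L hc hL
    obtain ⟨N, hN1, hN2, hN3⟩ : ∃ N : ℝ, -N ≤ c ∧ -l * N + m * R ≤ c ∧ -m * N + l * R ≤ c := by
      refine ⟨max (-c) (max ((m * R - c) / l) ((l * R - c) / m)), ?_, ?_, ?_⟩
      · linarith [le_max_left (-c) (max ((m * R - c) / l) ((l * R - c) / m))]
      · have := (le_max_left ((m * R - c) / l) ((l * R - c) / m)).trans (le_max_right (-c) _)
        rw [div_le_iff₀ hl] at this
        linarith
      · have := (le_max_right ((m * R - c) / l) ((l * R - c) / m)).trans (le_max_right (-c) _)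
        rw [div_le_iff₀ hm] at this
        linarith
    have hcd : ∀ S : Set E, Continuous fun z => Metric.infDist z S :=
      fun S => Metric.continuous_infDist_pt S
    have cont : ∀ (S : Set E) (c : ℝ), Continuous fun z => max c (R - L * Metric.infDist z S) := by
      intro S c
      have := hcd S
      fun_prop
    have hup : ∀ (S : Set E) (c : ℝ), c ≤ R → ∀ z, max c (R - L * Metric.infDist z S) ≤ R := by
      intro S c hc z
      have := mul_nonneg hL (Metric.infDist_nonneg (x := z) (s := S))
      exact max_le hc (by linarith)
    have bd : ∀ (S : Set E) (c : ℝ), -N ≤ c → c ≤ R → ∀ z,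
        |max c (R - L * Metric.infDist z S)| ≤ max N R := by
      intro S c h1 h2 z
      rw [abs_le]
      constructor
      · have := le_max_left N R
        have := le_max_left c (R - L * Metric.infDist z S)
        linarith
      · exact (hup S c h2 z).trans (le_max_right _ _)
    have main := h (max N R) (fun z => max (-N) (R - L * Metric.infDist z A))
      (fun z => max (-N) (R - L * Metric.infDist z B)) (fun z => max c (R - L * Metric.infDist z C))
      (cont _ _) (cont _ _) (cont _ _) (bd _ _ le_rfl (hN1.trans hc)) (bd _ _ le_rfl (hN1.trans hc))
      (bd _ _ hN1 hc) (by
        intro x y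
        have ux := hup A (-N) (hN1.trans hc) x
        have uy := hup B (-N) (hN1.trans hc) y
        rcases max_choice (-N) (R - L * Metric.infDist x A) with hx | hx
        · refine le_trans ?_ (le_max_left _ _)
          rw [hx]
          have := mul_le_mul_of_nonneg_left uy hm.le
          linarith
        · rcases max_choice (-N) (R - L * Metric.infDist y B) with hy | hy
          · refine le_trans ?_ (le_max_left _ _)
            rw [hy]
            have := mul_le_mul_of_nonneg_left ux hl.le
            linarith
          · refine le_trans ?_ (le_max_right _ _)
            rw [hx, hy]
            have := mul_le_mul_of_nonneg_left (hdist x y) hL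
            have hR : R = l * R + m * R := by rw [← add_mul, hlm, one_mul]
            linarith)
    have mem := fun (S : Set E) (c : ℝ) (h1 : -N ≤ c) (h2 : c ≤ R) =>
      int_Phi_mem (μ := μ) (cont S c) (bd S c h1 h2)
    have low : ∀ S : Set E, IsClosed S → 0 < μ.real S →
        PhiInv (Phi R * μ.real S) ≤ PhiInv (∫ z, Phi (max (-N) (R - L * Metric.infDist z S)) ∂μ) := by
      intro S hS hS0
      have m1 := mem S (-N) le_rfl (hN1.trans hc)
      rw [← strictMono_Phi.le_iff_le, Phi_PhiInv (mul_pos (Phi_pos _) hS0), Phi_PhiInv]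
      · rw [mul_comm, ← smul_eq_mul, ← integral_indicator_const _ hS.measurableSet]
        apply integral_mono
        · exact (integrable_const _).indicator hS.measurableSet
        · exact int_Phi (cont _ _)
        · intro z
          by_cases hz : z ∈ S
          · simp only [Set.indicator_of_mem hz]
            apply strictMono_Phi.monotone
            rw [Metric.infDist_zero_of_mem hz]
            simp
          · simp only [Set.indicator_of_notMem hz]
            exact (Phi_pos _).le
      · exact (Phi_pos _).trans_le m1.1
      · exact m1.2.trans_lt (Phi_lt_one _)
      · have : μ.real S ≤ 1 := measureReal_le_one
        have := Phi_lt_one R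
        nlinarith [Phi_pos R]
    have mC := mem C c hN1 hc
    rw [← Phi_PhiInv ((Phi_pos _).trans_le mC.1) (mC.2.trans_lt (Phi_lt_one _))]
    apply strictMono_Phi.monotone
    refine le_trans ?_ main
    have e1 := mul_le_mul_of_nonneg_left (low A hA hA0) hl.le
    have e2 := mul_le_mul_of_nonneg_left (low B hB hB0) hm.le
    exact add_le_add e1 e2
  -- step 2: L → ∞
  have step2 : ∀ (R c : ℝ), c ≤ R →
      Phi (l * PhiInv (Phi R * μ.real A) + m * PhiInv (Phi R * μ.real B)) ≤ μ.real C + Phi c := by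
    intro R c hc
    have hlim : Tendsto (fun L : ℕ => ∫ z, Phi (max c (R - L * Metric.infDist z C)) ∂μ) atTop
        (𝓝 (∫ z, (C.indicator (fun _ => Phi R) z + Cᶜ.indicator (fun _ => Phi c) z) ∂μ)) := by
      apply tendsto_integral_of_dominated_convergence (fun _ => (1:ℝ))
      · intro L
        have := Metric.continuous_infDist_pt C
        exact (continuous_Phi.comp (by fun_prop)).aestronglyMeasurable
      · exact integrable_const _
      · refine fun L => ae_of_all _ fun z => ?_
        rw [Real.norm_eq_abs, abs_of_pos (Phi_pos _)]
        exact (Phi_lt_one _).le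
      · refine ae_of_all _ fun z => ?_
        by_cases hz : z ∈ C
        · simp [hz, Metric.infDist_zero_of_mem hz, max_eq_right hc]
        · have hpos : 0 < Metric.infDist z C := (hC.notMem_iff_infDist_pos nC).1 hz
          have hz' : z ∈ Cᶜ := hz
          rw [Set.indicator_of_notMem hz, Set.indicator_of_mem hz', zero_add]
          apply tendsto_const_nhds.congr'
          have ht : Tendsto (fun L : ℕ => (L : ℝ) * Metric.infDist z C) atTop atTop :=
            tendsto_natCast_atTop_atTop.atTop_mul_const hpos
          filter_upwards [ht.eventually_ge_atTop (R - c)] with L hL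
          rw [max_eq_left (by linarith)]
    have h1 := ge_of_tendsto' hlim (fun L => step1 R c L hc (Nat.cast_nonneg L))
    refine h1.trans ?_
    rw [integral_add ((integrable_const _).indicator hC.measurableSet)
      ((integrable_const _).indicator hC.measurableSet.compl), integral_indicator_const _ hC.measurableSet,
      integral_indicator_const _ hC.measurableSet.compl, smul_eq_mul, smul_eq_mul]
    have b1 : μ.real C ≥ 0 := measureReal_nonneg
    have b2 : μ.real Cᶜ ≤ 1 := measureReal_le_one
    have := (Phi_lt_one R).le
    have := (Phi_pos c).le
    apply add_le_add
    · exact mul_le_of_le_one_right b1 ‹_›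
    · exact mul_le_of_le_one_left this b2
  -- step 3: c → -∞
  have step3 : ∀ (R : ℝ),
      Phi (l * PhiInv (Phi R * μ.real A) + m * PhiInv (Phi R * μ.real B)) ≤ μ.real C := by
    intro R
    have : Tendsto (fun c => μ.real C + Phi c) atBot (𝓝 (μ.real C + 0)) :=
      tendsto_const_nhds.add tendsto_Phi_atBot
    rw [add_zero] at this
    refine ge_of_tendsto this ?_
    filter_upwards [eventually_le_atBot R] with c hc using step2 R c hc
  have lim : ∀ p : ℝ, 0 < p → p < 1 → Tendsto (fun R => PhiInv (Phi R * p)) atTop (𝓝 (PhiInv p)) := by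
    intro p h0 h1
    refine (continuousAt_PhiInv h0 h1).tendsto.comp ?_
    simpa using tendsto_Phi_atTop.mul_const p
  have T := (continuous_Phi.tendsto _).comp
    (((lim _ hA0 hA1).const_mul l).add ((lim _ hB0 hB1).const_mul m))
  exact le_of_tendsto' T step3


lemma chi_F_conv (k n : ℕ) (f : (Fin n → ℝ) → ℝ)
    (hconv : ConvexOn ℝ {x : Fin n → ℝ | ∀ i, 0 ≤ x i} f)
    (hmono : ∀ x y : Fin n → ℝ, (∀ i, 0 ≤ x i) → (∀ i, x i ≤ y i) → f x ≤ f y) :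
    ConvexOn ℝ Set.univ (fun z : Fin n → Fin k → ℝ => f (fun j => ∑ i, (z j i) ^ 2)) := by
  refine ⟨convex_univ, ?_⟩
  intro x _ y _ a b ha hb hab
  have h0 : ∀ z : Fin n → Fin k → ℝ, (fun j => ∑ i, (z j i) ^ 2) ∈ {x : Fin n → ℝ | ∀ i, 0 ≤ x i} :=
    fun z j => Finset.sum_nonneg fun i _ => sq_nonneg _
  refine le_trans ?_ (hconv.2 (h0 x) (h0 y) ha hb hab)
  apply hmono _ _ (h0 _)
  intro j
  simp only [Pi.add_apply, Pi.smul_apply, smul_eq_mul, Finset.mul_sum, ← Finset.sum_add_distrib]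
  refine Finset.sum_le_sum fun i _ => ?_
  have hb' : b = 1 - a := by linarith
  subst hb'
  nlinarith [mul_nonneg (mul_nonneg ha hb) (sq_nonneg (x j i - y j i))]

lemma chi_meas (k n : ℕ) (hk : 2 ≤ k) (f : (Fin n → ℝ) → ℝ)
    (hF : Continuous (fun z : Fin n → Fin k → ℝ => f (fun j => ∑ i, (z j i) ^ 2))) (t : ℝ) :
    (Measure.pi fun _ : Fin n => chiSq k) {x | f x ≤ t}
      = (Measure.pi fun _ : Fin n => Measure.pi fun _ : Fin k => gaussianReal 0 1)
        {z | f (fun j => ∑ i, (z j i) ^ 2) ≤ t} := by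
  have hm1 : Measurable (fun x : Fin k → ℝ => ∑ i, (x i) ^ 2) := by fun_prop
  have hS : Measurable (fun (z : Fin n → Fin k → ℝ) (j : Fin n) => ∑ i, (z j i) ^ 2) := by fun_prop
  have hmap : (Measure.pi fun _ : Fin n => chiSq k)
      = (Measure.pi fun _ : Fin n => Measure.pi fun _ : Fin k => gaussianReal 0 1).map
        (fun (z : Fin n → Fin k → ℝ) (j : Fin n) => ∑ i, (z j i) ^ 2) := by
    haveI : IsProbabilityMeasure ((Measure.pi fun _ : Fin k => gaussianReal 0 1).map
        (fun x : Fin k → ℝ => ∑ i, (x i) ^ 2)) :=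
      Measure.isProbabilityMeasure_map hm1.aemeasurable
    exact (Measure.pi_map_pi (fun _ => hm1.aemeasurable)).symm
  let i0 : Fin k := ⟨0, by omega⟩
  let r : (Fin n → ℝ) → (Fin n → Fin k → ℝ) := fun x j i => if i = i0 then √(x j) else 0
  have hr : Continuous r := by
    refine continuous_pi fun j => continuous_pi fun i => ?_
    by_cases h : i = i0
    · simp only [r, h, if_true]; fun_prop
    · simp only [r, h, if_false]; fun_prop
  have hrS : ∀ x : Fin n → ℝ, (∀ j, 0 ≤ x j) → (fun j => ∑ i, (r x j i) ^ 2) = x := by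
    intro x hx
    funext j
    simp [r, ite_pow, Real.sq_sqrt (hx j)]
  let g : (Fin n → ℝ) → ℝ := fun x => f (fun j => ∑ i, (r x j i) ^ 2)
  have hg : Continuous g := hF.comp hr
  have hcl : MeasurableSet {x | g x ≤ t} := (isClosed_le hg continuous_const).measurableSet
  have hpos : ∀ᵐ x ∂(Measure.pi fun _ : Fin n => chiSq k), ∀ j, 0 ≤ x j := by
    rw [hmap, ae_map_iff hS.aemeasurable]
    · exact ae_of_all _ fun z j => Finset.sum_nonneg fun i _ => sq_nonneg _
    · exact measurableSet_setOf.2 (by fun_prop)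
  have h1 : (Measure.pi fun _ : Fin n => chiSq k) {x | f x ≤ t}
      = (Measure.pi fun _ : Fin n => chiSq k) {x | g x ≤ t} := by
    apply measure_congr
    filter_upwards [hpos] with x hx
    have : g x = f x := by simp only [g, hrS x hx]
    change (f x ≤ t) = (g x ≤ t)
    rw [this]
  rw [h1, hmap, Measure.map_apply hS hcl]
  congr 1
  ext z
  simp only [Set.mem_preimage, Set.mem_setOf_eq, g]
  rw [hrS _ (fun j => Finset.sum_nonneg fun i _ => sq_nonneg _)]

/-- Let `k ≥ 2` and let `W = (w₁, …, wₙ)` have independent `χ²(k)` coordinates. For any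
coordinatewise non-decreasing convex `f : ℝ₊ⁿ → ℝ`, the map `t ↦ Φ⁻¹(P(f(W) ≤ t))` is
concave on the set where it is defined (where the probability is strictly between 0 and 1). -/
theorem stmt12 (k n : ℕ) (hk : 2 ≤ k) (f : (Fin n → ℝ) → ℝ)
    (hconv : ConvexOn ℝ {x : Fin n → ℝ | ∀ i, 0 ≤ x i} f)
    (hmono : ∀ x y : Fin n → ℝ, (∀ i, 0 ≤ x i) → (∀ i, x i ≤ y i) → f x ≤ f y) :
    ConcaveOn ℝ
      {t : ℝ | 0 < (Measure.pi fun _ : Fin n => chiSq k) {x | f x ≤ t} ∧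
        (Measure.pi fun _ : Fin n => chiSq k) {x | f x ≤ t} < 1}
      (fun t => PhiInv (((Measure.pi fun _ : Fin n => chiSq k) {x | f x ≤ t}).toReal)) := by
  have hFc := chi_F_conv k n f hconv hmono
  have hF : Continuous (fun z : Fin n → Fin k → ℝ => f (fun j => ∑ i, (z j i) ^ 2)) :=
    hFc.locallyLipschitz.continuous
  simp only [chi_meas k n hk f hF]
  generalize hFF : (fun z : Fin n → Fin k → ℝ => f (fun j => ∑ i, (z j i) ^ 2)) = F at hFc hF
  have e : ∀ t, {z : Fin n → Fin k → ℝ | f (fun j => ∑ i, (z j i) ^ 2) ≤ t} = {z | F z ≤ t} := by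
    intro t; rw [← hFF]
  simp only [e]
  set γ : Measure (Fin n → Fin k → ℝ) :=
    Measure.pi fun _ : Fin n => Measure.pi fun _ : Fin k => gaussianReal 0 1 with hγ
  have mono : ∀ s t : ℝ, s ≤ t → γ {z | F z ≤ s} ≤ γ {z | F z ≤ t} := fun s t h =>
    measure_mono fun z (hz : F z ≤ s) => hz.trans h
  have hcv : Convex ℝ {t : ℝ | 0 < γ {z | F z ≤ t} ∧ γ {z | F z ≤ t} < 1} := by
    apply Set.OrdConnected.convex
    refine ⟨fun x hx y hy z hz => ⟨hx.1.trans_le (mono _ _ hz.1), (mono _ _ hz.2).trans_lt hy.2⟩⟩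
  have conv : ∀ t, 0 < γ {z | F z ≤ t} → γ {z | F z ≤ t} < 1 →
      0 < γ.real {z | F z ≤ t} ∧ γ.real {z | F z ≤ t} < 1 := by
    intro t h0 h1
    refine ⟨ENNReal.toReal_pos h0.ne' (measure_ne_top _ _), ?_⟩
    have := (ENNReal.toReal_lt_toReal (measure_ne_top γ _) ENNReal.one_ne_top).2 h1
    simpa [Measure.real] using this
  refine ⟨hcv, ?_⟩
  intro s hs t ht a b ha hb hab
  have hu := hcv hs ht ha hb hab
  rcases ha.eq_or_lt with rfl | ha
  · have : b = 1 := by linarith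
    subst this; simp
  rcases hb.eq_or_lt with rfl | hb
  · have : a = 1 := by linarith
    subst this; simp
  obtain ⟨s0, s1⟩ := conv s hs.1 hs.2
  obtain ⟨t0, t1⟩ := conv t ht.1 ht.2
  obtain ⟨u0, u1⟩ := conv _ hu.1 hu.2
  have cl : ∀ t, IsClosed {z | F z ≤ t} := fun t => isClosed_le hF continuous_const
  have B : Bor (Fin n → Fin k → ℝ) γ a b := bor_pi (bor_pi (bor_gauss ha hb hab) k) n
  have key := bor_sets ha hb hab B (cl s) (cl t) (cl (a • s + b • t)) ?_ s0 s1 t0 t1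
  · rw [← Phi_PhiInv u0 u1, strictMono_Phi.le_iff_le] at key
    exact key
  · intro x hx y hy
    refine (hFc.2 (Set.mem_univ x) (Set.mem_univ y) ha.le hb.le hab).trans ?_
    exact add_le_add (smul_le_smul_of_nonneg_left hx ha.le) (smul_le_smul_of_nonneg_left hy hb.le)
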